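/- Let x, y ∈ H_{p,q}, so that 1_n − x, 1_n − y and 1_n − xy are invertible, and set a_x = s(1_n + x)(1_n − x)^{-1}, a_y = s(1_n + y)(1_n − y)^{-1}, a_{xy} = s(1_n + xy)(1_n − xy)^{-1}. Then the matrix a_x + a_y is invertible and a_{xy} + s = (a_y + s)(a_x + a_y)^{-1}(a_x + s); that is, the Cayley transform intertwines matrix multiplication in H_{p,q} with the composition law X ∘ Y = (Y + s)(X + Y)^{-1}(X + s) − s on ζ_s^+. -/

import Mathlib

open Matrix
open scoped ComplexOrder

/-- The signature matrix `s = diag(1,…,1,−1,…,−1)` with `p` entries `+1` and `q`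
entries `−1`. -/
noncomputable def sMat (p q : ℕ) : Matrix (Fin (p + q)) (Fin (p + q)) ℂ :=
  Matrix.diagonal (fun i => if (i : ℕ) < p then 1 else -1)

theorem aux_isUnit {n : Type*} [Fintype n] [DecidableEq n] (s x : Matrix n n ℂ)
    (hx : (s - xᴴ * s * x).PosDef) : IsUnit (1 - x) := by
  rw [← Matrix.mulVec_injective_iff_isUnit]
  rw [← Matrix.coe_mulVecLin, ← LinearMap.ker_eq_bot, LinearMap.ker_eq_bot']
  intro v hv
  by_contra hne
  have h1 : x *ᵥ v = v := by
    have : (1 - x) *ᵥ v = 0 := hv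
    rw [Matrix.sub_mulVec, Matrix.one_mulVec, sub_eq_zero] at this
    exact this.symm
  have h2 := hx.dotProduct_mulVec_pos hne
  have h3 : star v ⬝ᵥ ((xᴴ * s * x) *ᵥ v) = star v ⬝ᵥ (s *ᵥ v) := by
    rw [← Matrix.mulVec_mulVec, ← Matrix.mulVec_mulVec, h1, Matrix.dotProduct_mulVec,
      ← Matrix.star_mulVec, h1]
  rw [Matrix.sub_mulVec, dotProduct_sub, h3, sub_self] at h2
  exact lt_irrefl _ h2

theorem aux_mul {n : Type*} [Fintype n] [DecidableEq n] (s x y : Matrix n n ℂ)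
    (hx : (s - xᴴ * s * x).PosDef) (hy : (s - yᴴ * s * y).PosDef) :
    (s - (x * y)ᴴ * s * (x * y)).PosDef := by
  have h := hy.add_posSemidef (hx.posSemidef.conjTranspose_mul_mul_same y)
  convert h using 1
  rw [Matrix.conjTranspose_mul]
  noncomm_ring

theorem aux_s (p q : ℕ) : sMat p q * sMat p q = 1 := by
  unfold sMat
  rw [Matrix.diagonal_mul_diagonal, ← Matrix.diagonal_one]
  congr 1
  funext i
  split_ifs <;> simp

theorem aux_cayley {n : Type*} [Fintype n] [DecidableEq n] (x : Matrix n n ℂ)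
    (h : IsUnit (1 - x)) : (1 + x) * (1 - x)⁻¹ = (2 : ℂ) • (1 - x)⁻¹ - 1 := by
  have h1 : (1 - x) * (1 - x)⁻¹ = 1 :=
    Matrix.mul_nonsing_inv _ ((Matrix.isUnit_iff_isUnit_det _).1 h)
  calc (1 + x) * (1 - x)⁻¹ = (2 : ℂ) • (1 - x)⁻¹ - (1 - x) * (1 - x)⁻¹ := by
        rw [two_smul]; noncomm_ring
    _ = _ := by rw [h1]

/-- The Cayley transform `h ↦ a_h = s(1+h)(1−h)⁻¹` intertwines multiplication in the
semigroup `H_{p,q}` with the composition law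
`X ∘ Y = (Y+s)(X+Y)⁻¹(X+s) − s` on `ζ_s⁺` (computation in the proof of Lemma 5.6). -/
theorem cayley_intertwines_composition (p q : ℕ) (hp : 1 ≤ p) (hq : 1 ≤ q)
    (x y : Matrix (Fin (p + q)) (Fin (p + q)) ℂ)
    (hx : (sMat p q - xᴴ * sMat p q * x).PosDef)
    (hy : (sMat p q - yᴴ * sMat p q * y).PosDef) :
    IsUnit (sMat p q * (1 + x) * (1 - x)⁻¹ + sMat p q * (1 + y) * (1 - y)⁻¹) ∧
    sMat p q * (1 + x * y) * (1 - x * y)⁻¹ + sMat p q =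
      (sMat p q * (1 + y) * (1 - y)⁻¹ + sMat p q) *
        (sMat p q * (1 + x) * (1 - x)⁻¹ + sMat p q * (1 + y) * (1 - y)⁻¹)⁻¹ *
        (sMat p q * (1 + x) * (1 - x)⁻¹ + sMat p q) := by
  have ux := aux_isUnit _ _ hx
  have uy := aux_isUnit _ _ hy
  have uxy := aux_isUnit _ _ (aux_mul _ _ _ hx hy)
  have hs := aux_s p q
  rw [Matrix.mul_assoc, Matrix.mul_assoc, Matrix.mul_assoc, aux_cayley _ ux, aux_cayley _ uy,
    aux_cayley _ uxy]
  have dx := (Matrix.isUnit_iff_isUnit_det _).1 ux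
  have dy := (Matrix.isUnit_iff_isUnit_det _).1 uy
  have dxy := (Matrix.isUnit_iff_isUnit_det _).1 uxy
  have x1 := Matrix.mul_nonsing_inv _ dx
  have x2 := Matrix.nonsing_inv_mul _ dx
  have y1 := Matrix.mul_nonsing_inv _ dy
  have y2 := Matrix.nonsing_inv_mul _ dy
  have z1 := Matrix.mul_nonsing_inv _ dxy
  have z2 := Matrix.nonsing_inv_mul _ dxy
  generalize sMat p q = s at *
  generalize (1 - x)⁻¹ = X at *
  generalize (1 - y)⁻¹ = Y at *
  generalize (1 - x * y)⁻¹ = Z at *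
  have hsum : s * ((2 : ℂ) • X - 1) + s * ((2 : ℂ) • Y - 1)
      = (2 : ℂ) • (s * (X * (1 - x * y) * Y)) := by
    have e : X * (1 - x * y) * Y = X + Y - 1 := by
      calc X * (1 - x * y) * Y
          = X * ((1 - y) * Y) + (X * (1 - x)) * Y - (X * (1 - x)) * ((1 - y) * Y) := by
            noncomm_ring
        _ = _ := by rw [y1, x2]; simp
    rw [e, two_smul, two_smul, two_smul]; noncomm_ring
  have hinv : ((2 : ℂ) • (s * (X * (1 - x * y) * Y))) *
      ((1 / 2 : ℂ) • ((1 - y) * Z * (1 - x) * s)) = 1 := by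
    rw [smul_mul_smul_comm]
    have : s * (X * (1 - x * y) * Y) * ((1 - y) * Z * (1 - x) * s) = 1 := by
      calc _ = s * (X * ((1 - x * y) * ((Y * (1 - y)) * Z)) * (1 - x) * s) := by
            simp only [Matrix.mul_assoc]
        _ = 1 := by rw [y2, Matrix.one_mul, z1, Matrix.mul_one, x2, Matrix.one_mul, hs]
    rw [this]; norm_num
  rw [hsum]
  refine ⟨IsUnit.of_mul_eq_one _ hinv, ?_⟩
  rw [Matrix.inv_eq_right_inv hinv]
  have e (W : Matrix (Fin (p + q)) (Fin (p + q)) ℂ) :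
      s * ((2 : ℂ) • W - 1) + s = (2 : ℂ) • (s * W) := by
    rw [Matrix.mul_sub, Matrix.mul_one, sub_add_cancel, Matrix.mul_smul]
  rw [e, e, e, smul_mul_smul_comm, smul_mul_smul_comm]
  have : s * Y * ((1 - y) * Z * (1 - x) * s) * (s * X) = s * Z := by
    calc _ = s * ((Y * (1 - y)) * (Z * ((1 - x) * ((s * s) * X)))) := by
          simp only [Matrix.mul_assoc]
      _ = _ := by rw [y2, hs, Matrix.one_mul, Matrix.one_mul, x1, Matrix.mul_one]
  rw [this]; norm_num
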